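/- Let r > π²/2. Then there exists a unique k ∈ (0, 1) with L(k) = r, where L(k) = 2·K(k)·(2·E(k) − (1 − k²)·K(k)); and for this k, setting a = K(k)·(1 + k)²/(2·E(k) − (1 − k²)·K(k)) and b = K(k)·(1 − k)²/(2·E(k) − (1 − k²)·K(k)), one has a > 0, b > 0, (√a − √b)/(√a + √b) = k, and the two conditions √(r/2)·(√a + √b) = 2·K(k) and (√a + √b)·√(2/r)·E(k) − √(a·b) = 1 hold. -/

import Mathlib

/-!
Write `D = 2E - (1 - k²)K`, so that `L = 2KD`. The identities for `a` and `b` are algebra once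
`K > 0` and `D > 0` are known, since then `√a ± √b` are multiples of `√(K/D)` and `r = 2KD`.

Existence and uniqueness of `k` follow from `L` being continuous and strictly increasing on `[0, 1)`
with `L 0 = π²/2` and `L` unbounded near `1`.

* `K` is strictly increasing because its integrand is monotone in `k`.
* `D` is nondecreasing, although its integrand is not pointwise monotone. With `Δᵢ = 1 - kᵢ² sin² θ`,
  the difference of the integrands of `D k₂` and `D k₁` equals
  `(k₂² - k₁²) cos² θ / (√Δ₁ + √Δ₂)` plus the `θ`-derivative of
  `(k₂² - k₁²) sin θ cos θ / (√Δ₁ + √Δ₂)`, and the latter function vanishes at `0` and `π/2`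
  (`ellipticD_mono`). In particular `D k ≥ D 0 = π/2 > 0`.
* `K` is unbounded: `√(1 - k² sin² θ) ≤ √(1 - k²) + (π/2 - θ)`, which gives
  `K k ≥ -log √(1 - k²)` (`neg_log_le_ellipticK`).
-/

open Real

/-- The complete elliptic integral of the first kind. -/
noncomputable def ellipticK (k : ℝ) : ℝ :=
  ∫ θ in (0:ℝ)..(Real.pi / 2), 1 / Real.sqrt (1 - k ^ 2 * Real.sin θ ^ 2)

/-- The complete elliptic integral of the second kind. -/
noncomputable def ellipticE (k : ℝ) : ℝ :=
  ∫ θ in (0:ℝ)..(Real.pi / 2), Real.sqrt (1 - k ^ 2 * Real.sin θ ^ 2)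

/-- `L(k) := 2K(k)(2E(k) − (1 − k²)K(k))`. -/
noncomputable def L (k : ℝ) : ℝ :=
  2 * ellipticK k * (2 * ellipticE k - (1 - k ^ 2) * ellipticK k)

/-- The second factor `2E(k) - (1 - k²)K(k)` of `L`. -/
noncomputable def ellipticD (k : ℝ) : ℝ :=
  2 * ellipticE k - (1 - k ^ 2) * ellipticK k

lemma delta_ge {k : ℝ} (θ : ℝ) : 1 - k ^ 2 ≤ 1 - k ^ 2 * sin θ ^ 2 := by
  nlinarith [sq_nonneg k, sin_sq_le_one θ]

lemma delta_pos {k : ℝ} (h0 : 0 ≤ k) (h1 : k < 1) (θ : ℝ) : 0 < 1 - k ^ 2 * sin θ ^ 2 := by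
  have := delta_ge (k := k) θ
  nlinarith

lemma continuous_inv_sqrt_delta {k : ℝ} (h0 : 0 ≤ k) (h1 : k < 1) :
    Continuous fun θ : ℝ => 1 / √(1 - k ^ 2 * sin θ ^ 2) := by
  refine Continuous.div (by fun_prop) (by fun_prop) fun θ => ?_
  exact (sqrt_pos.2 (delta_pos h0 h1 θ)).ne'

lemma continuous_sqrt_delta (k : ℝ) :
    Continuous fun θ : ℝ => √(1 - k ^ 2 * sin θ ^ 2) := by
  fun_prop

lemma ellipticK_zero : ellipticK 0 = π / 2 := by simp [ellipticK]

lemma ellipticE_zero : ellipticE 0 = π / 2 := by simp [ellipticE]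

lemma ellipticD_zero : ellipticD 0 = π / 2 := by
  simp only [ellipticD, ellipticK_zero, ellipticE_zero]; ring

lemma ellipticK_lt {k₁ k₂ : ℝ} (h0 : 0 ≤ k₁) (h : k₁ < k₂) (h1 : k₂ < 1) :
    ellipticK k₁ < ellipticK k₂ := by
  have hsq : k₁ ^ 2 < k₂ ^ 2 := by nlinarith
  have hpi := pi_pos
  refine intervalIntegral.integral_lt_integral_of_continuousOn_of_le_of_exists_lt (by linarith)
    (continuous_inv_sqrt_delta h0 (h.trans h1)).continuousOn
    (continuous_inv_sqrt_delta (h0.trans h.le) h1).continuousOn ?_ ?_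
  · intro θ _
    have hp := delta_pos (h0.trans h.le) h1 θ
    refine one_div_le_one_div_of_le (sqrt_pos.2 hp) (sqrt_le_sqrt ?_)
    nlinarith [sq_nonneg (sin θ)]
  · refine ⟨π / 2, ⟨by linarith, le_rfl⟩, ?_⟩
    have hp := delta_pos (h0.trans h.le) h1 (π / 2)
    refine one_div_lt_one_div_of_lt (sqrt_pos.2 hp) (sqrt_lt_sqrt hp.le ?_)
    simp only [sin_pi_div_two]
    linarith

lemma ellipticK_pos {k : ℝ} (h0 : 0 ≤ k) (h1 : k < 1) : 0 < ellipticK k := by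
  have hpi := pi_pos
  have hK : 0 < ellipticK 0 := by rw [ellipticK_zero]; linarith
  rcases h0.eq_or_lt with rfl | h
  · exact hK
  · exact hK.trans (ellipticK_lt le_rfl h h1)

lemma ellipticD_eq_integral {k : ℝ} (h0 : 0 ≤ k) (h1 : k < 1) :
    ellipticD k = ∫ θ in (0:ℝ)..(π / 2),
      (2 * √(1 - k ^ 2 * sin θ ^ 2) - (1 - k ^ 2) * (1 / √(1 - k ^ 2 * sin θ ^ 2))) := by
  rw [intervalIntegral.integral_sub, intervalIntegral.integral_const_mul,
    intervalIntegral.integral_const_mul]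
  · rfl
  · exact ((continuous_sqrt_delta k).const_mul 2).intervalIntegrable _ _
  · exact ((continuous_inv_sqrt_delta h0 h1).const_mul _).intervalIntegrable _ _

/-- The algebraic form of the decomposition of the difference of the integrands of `D`, with
`s = sin θ`, `c = cos θ`, `mᵢ = kᵢ²` and `u = √Δ₁`, `v = √Δ₂`. -/
lemma integrand_identity {m₁ m₂ s c u v : ℝ} (hu : 0 < u) (hv : 0 < v)
    (hu2 : u ^ 2 = 1 - m₁ * s ^ 2) (hv2 : v ^ 2 = 1 - m₂ * s ^ 2) (hc : c ^ 2 = 1 - s ^ 2) :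
    (2 * v - (1 - m₂) * (1 / v)) - (2 * u - (1 - m₁) * (1 / u)) =
      (m₂ - m₁) * (c ^ 2 / (u + v)) +
      (m₂ - m₁) * (((c ^ 2 - s ^ 2) * (u + v) - s * c * (-(m₁ * s * c / u) - m₂ * s * c / v))
        / (u + v) ^ 2) := by
  by_cases hs : s = 0
  · subst hs
    have hu1 : u = 1 := by nlinarith
    have hv1 : v = 1 := by nlinarith
    subst hu1 hv1
    have : c ^ 2 = 1 := by linarith
    rw [this]
    ring
  · have e1 : m₁ = (1 - u ^ 2) / s ^ 2 := by field_simp; linarith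
    have e2 : m₂ = (1 - v ^ 2) / s ^ 2 := by field_simp; linarith
    have e3 : s * c * (-(m₁ * s * c / u) - m₂ * s * c / v)
        = s ^ 2 * c ^ 2 * (-(m₁ / u) - m₂ / v) := by ring
    have huv : u + v ≠ 0 := by positivity
    rw [e3, hc, e1, e2]
    field_simp
    ring

lemma hasDerivAt_sqrt_delta {k : ℝ} (h0 : 0 ≤ k) (h1 : k < 1) (θ : ℝ) :
    HasDerivAt (fun θ : ℝ => √(1 - k ^ 2 * sin θ ^ 2))
      (-(k ^ 2 * sin θ * cos θ / √(1 - k ^ 2 * sin θ ^ 2))) θ := by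
  have hp := delta_pos h0 h1 θ
  have h := ((((hasDerivAt_sin θ).pow 2).const_mul (k ^ 2)).const_sub 1).sqrt hp.ne'
  refine h.congr_deriv ?_
  have := (sqrt_pos.2 hp).ne'
  simp
  field_simp

/-- The integrand of `D` is not monotone in `k`; it becomes so after subtracting the derivative of
a function of `θ` vanishing at both endpoints. -/
lemma ellipticD_mono {k₁ k₂ : ℝ} (h0 : 0 ≤ k₁) (h : k₁ ≤ k₂) (h1 : k₂ < 1) :
    ellipticD k₁ ≤ ellipticD k₂ := by
  have h0' := h0.trans h
  have h1' := h.trans_lt h1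
  have hsq : k₁ ^ 2 ≤ k₂ ^ 2 := by nlinarith
  have hpi := pi_pos
  set u : ℝ → ℝ := fun θ => √(1 - k₁ ^ 2 * sin θ ^ 2) with hu
  set v : ℝ → ℝ := fun θ => √(1 - k₂ ^ 2 * sin θ ^ 2) with hv
  have up : ∀ θ, 0 < u θ := fun θ => sqrt_pos.2 (delta_pos h0 h1' θ)
  have vp : ∀ θ, 0 < v θ := fun θ => sqrt_pos.2 (delta_pos h0' h1 θ)
  have uvp : ∀ θ, u θ + v θ ≠ 0 := fun θ => (add_pos (up θ) (vp θ)).ne'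
  have uc : Continuous u := continuous_sqrt_delta k₁
  have vc : Continuous v := continuous_sqrt_delta k₂
  set W' : ℝ → ℝ := fun θ => (k₂ ^ 2 - k₁ ^ 2) *
    (((cos θ ^ 2 - sin θ ^ 2) * (u θ + v θ) - sin θ * cos θ *
      (-(k₁ ^ 2 * sin θ * cos θ / u θ) - k₂ ^ 2 * sin θ * cos θ / v θ)) / (u θ + v θ) ^ 2)
    with hW'
  have hder : ∀ θ, HasDerivAt
      (fun θ => (k₂ ^ 2 - k₁ ^ 2) * (sin θ * cos θ / (u θ + v θ))) (W' θ) θ := by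
    intro θ
    have hd := (((hasDerivAt_sin θ).mul (hasDerivAt_cos θ)).div
      ((hasDerivAt_sqrt_delta h0 h1' θ).add (hasDerivAt_sqrt_delta h0' h1 θ))
      (uvp θ)).const_mul (k₂ ^ 2 - k₁ ^ 2)
    refine hd.congr_deriv ?_
    simp only [hW', hu, hv, Pi.add_apply, Pi.mul_apply]
    ring
  have W'c : Continuous W' := by
    refine continuous_const.mul (Continuous.div ?_ (by fun_prop) fun θ => pow_ne_zero 2 (uvp θ))
    refine Continuous.sub (by fun_prop) (Continuous.mul (by fun_prop) ?_)
    exact (Continuous.neg (Continuous.div (by fun_prop) uc fun θ => (up θ).ne')).sub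
      (Continuous.div (by fun_prop) vc fun θ => (vp θ).ne')
  have hW : ∫ θ in (0:ℝ)..(π / 2), W' θ = 0 := by
    rw [intervalIntegral.integral_eq_sub_of_hasDerivAt (fun θ _ => hder θ)
      (W'c.intervalIntegrable _ _)]
    simp
  have gc : Continuous fun θ => (k₂ ^ 2 - k₁ ^ 2) * (cos θ ^ 2 / (u θ + v θ)) :=
    continuous_const.mul (Continuous.div (by fun_prop) (by fun_prop) uvp)
  have key : ellipticD k₂ - ellipticD k₁ =
      ∫ θ in (0:ℝ)..(π / 2), (k₂ ^ 2 - k₁ ^ 2) * (cos θ ^ 2 / (u θ + v θ)) := by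
    rw [ellipticD_eq_integral h0 h1', ellipticD_eq_integral h0' h1,
      ← intervalIntegral.integral_sub]
    · have hadd := intervalIntegral.integral_add (gc.intervalIntegrable 0 (π / 2))
        (W'c.intervalIntegrable (μ := MeasureTheory.volume) 0 (π / 2))
      rw [hW, add_zero] at hadd
      rw [← hadd]
      refine intervalIntegral.integral_congr fun θ _ => ?_
      exact integrand_identity (up θ) (vp θ) (sq_sqrt (delta_pos h0 h1' θ).le)
        (sq_sqrt (delta_pos h0' h1 θ).le) (cos_sq' θ)
    · exact (((continuous_sqrt_delta k₂).const_mul 2).sub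
        ((continuous_inv_sqrt_delta h0' h1).const_mul _)).intervalIntegrable _ _
    · exact (((continuous_sqrt_delta k₁).const_mul 2).sub
        ((continuous_inv_sqrt_delta h0 h1').const_mul _)).intervalIntegrable _ _
  have : 0 ≤ ellipticD k₂ - ellipticD k₁ := by
    rw [key]
    refine intervalIntegral.integral_nonneg (by linarith) fun θ _ => ?_
    exact mul_nonneg (by linarith) (div_nonneg (sq_nonneg _) (add_pos (up θ) (vp θ)).le)
  linarith

lemma ellipticD_ge {k : ℝ} (h0 : 0 ≤ k) (h1 : k < 1) : π / 2 ≤ ellipticD k :=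
  ellipticD_zero ▸ ellipticD_mono le_rfl h0 h1

lemma L_eq (k : ℝ) : L k = 2 * ellipticK k * ellipticD k := rfl

lemma L_lt {k₁ k₂ : ℝ} (h0 : 0 ≤ k₁) (h : k₁ < k₂) (h1 : k₂ < 1) : L k₁ < L k₂ := by
  have hD := ellipticD_mono h0 h.le h1
  have hK := ellipticK_lt h0 h h1
  have hD1 := ellipticD_ge h0 (h.trans h1)
  have hK1 := ellipticK_pos h0 (h.trans h1)
  have hpi := pi_pos
  rw [L_eq, L_eq]
  nlinarith

/-- On `[0, c]` the radicand is at least `1 - c²`, so truncating it from below there changes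
nothing and makes the integrands jointly continuous everywhere. -/
lemma continuousOn_L {c : ℝ} (hc1 : c < 1) : ContinuousOn L (Set.Icc 0 c) := by
  rcases lt_or_ge c 0 with hc | hc0
  · simp [Set.Icc_eq_empty hc.not_ge]
  have hδ : 0 < 1 - c ^ 2 := by nlinarith
  have hmax : ∀ k ∈ Set.Icc 0 c, ∀ θ : ℝ,
      max (1 - k ^ 2 * sin θ ^ 2) (1 - c ^ 2) = 1 - k ^ 2 * sin θ ^ 2 := by
    intro k hk θ
    refine max_eq_left ?_
    have := delta_ge (k := k) θ
    nlinarith [hk.1, hk.2]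
  have hK : ContinuousOn ellipticK (Set.Icc 0 c) := by
    have : Continuous fun k : ℝ => ∫ θ in (0:ℝ)..(π / 2),
        1 / √(max (1 - k ^ 2 * sin θ ^ 2) (1 - c ^ 2)) := by
      refine intervalIntegral.continuous_parametric_intervalIntegral_of_continuous' ?_ _ _
      refine Continuous.div (by fun_prop) (by fun_prop) fun p => ?_
      exact (sqrt_pos.2 (lt_max_of_lt_right hδ)).ne'
    refine this.continuousOn.congr fun k hk => ?_
    simp only [ellipticK, hmax k hk]
  have hE : Continuous ellipticE :=
    intervalIntegral.continuous_parametric_intervalIntegral_of_continuous' (by fun_prop) _ _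
  have hE' := hE.continuousOn (s := Set.Icc 0 c)
  unfold L
  fun_prop

lemma neg_log_le_ellipticK {k : ℝ} (h0 : 0 ≤ k) (h1 : k < 1) :
    -log √(1 - k ^ 2) ≤ ellipticK k := by
  have hpi := pi_gt_three
  have hpos : 0 < 1 - k ^ 2 := by nlinarith
  set q := √(1 - k ^ 2) with hq
  have hqp : 0 < q := sqrt_pos.2 hpos
  have hq2 : q ^ 2 = 1 - k ^ 2 := sq_sqrt hpos.le
  have hint : ∫ θ in (0:ℝ)..(π / 2), 1 / (q + (π / 2 - θ)) = log ((q + π / 2) / q) := by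
    have := intervalIntegral.integral_comp_sub_left (a := 0) (b := π / 2)
      (fun x : ℝ => 1 / x) (q + π / 2)
    rw [show q + π / 2 - π / 2 = q by ring, sub_zero,
      integral_one_div_of_pos hqp (by linarith)] at this
    rw [← this]
    simp only [add_sub_assoc]
  have hlog : -log q ≤ log ((q + π / 2) / q) := by
    rw [← log_inv]
    refine log_le_log (inv_pos.2 hqp) ?_
    rw [inv_eq_one_div]
    gcongr
    linarith
  refine hlog.trans (hint ▸ ?_)
  refine intervalIntegral.integral_mono_on (by linarith) ?_
    ((continuous_inv_sqrt_delta h0 h1).intervalIntegrable _ _) ?_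
  · refine ContinuousOn.intervalIntegrable (ContinuousOn.div (by fun_prop) (by fun_prop) ?_)
    intro θ hθ
    rw [Set.uIcc_of_le (by linarith)] at hθ
    have := hθ.2
    exact ne_of_gt (by linarith)
  · intro θ hθ
    refine one_div_le_one_div_of_le (sqrt_pos.2 (delta_pos h0 h1 θ)) ?_
    have hx : 0 ≤ π / 2 - θ := by linarith [hθ.2]
    refine sqrt_le_iff.2 ⟨by linarith, ?_⟩
    have hcos : cos θ ≤ π / 2 - θ := by
      rw [← sin_pi_div_two_sub]; exact sin_le hx
    have hcos0 : 0 ≤ cos θ := cos_nonneg_of_mem_Icc ⟨by linarith [hθ.1], hθ.2⟩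
    have hk2 : k ^ 2 ≤ 1 := by linarith
    have h2 : cos θ ^ 2 ≤ (π / 2 - θ) ^ 2 := by gcongr
    have h3 : k ^ 2 * cos θ ^ 2 ≤ cos θ ^ 2 := mul_le_of_le_one_left (sq_nonneg _) hk2
    have h4 := mul_nonneg hqp.le hx
    rw [sin_sq]
    nlinarith

/-- The modulus `k = √(1 - e^{-2r})` has `K k ≥ r`, hence `L k ≥ π r`. -/
lemma exists_lt_L {r : ℝ} (hr : 0 < r) : ∃ k : ℝ, 0 < k ∧ k < 1 ∧ r < L k := by
  have he : exp (-r) < 1 := by rw [← exp_zero]; exact exp_lt_exp.2 (by linarith)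
  have hep := exp_pos (-r)
  have hpos : 0 < 1 - exp (-r) ^ 2 := by nlinarith
  have h0 : 0 < √(1 - exp (-r) ^ 2) := sqrt_pos.2 hpos
  have h1 : √(1 - exp (-r) ^ 2) < 1 := by
    rw [sqrt_lt' one_pos]; nlinarith
  refine ⟨_, h0, h1, ?_⟩
  have hK := neg_log_le_ellipticK h0.le h1
  rw [sq_sqrt hpos.le, sub_sub_cancel, sqrt_sq hep.le, log_exp, neg_neg] at hK
  have hD := ellipticD_ge h0.le h1
  have hpi := pi_gt_three
  rw [L_eq]
  nlinarith

/-- For `r > π²/2` there is a unique `k ∈ (0,1)` with `L(k) = r`, and for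
this `k`, the choices `a = K(k)(1+k)²/(2E(k) − (1−k²)K(k))`,
`b = K(k)(1−k)²/(2E(k) − (1−k²)K(k))` satisfy `a, b > 0`,
`(√a − √b)/(√a + √b) = k`, `√(r/2)(√a + √b) = 2K(k)` and
`(√a + √b)√(2/r) E(k) − √(ab) = 1`. -/
theorem exists_unique_modulus_and_initial_values (r : ℝ) (hr : r > π ^ 2 / 2) :
    (∃! k : ℝ, k ∈ Set.Ioo (0:ℝ) 1 ∧ L k = r) ∧
      ∀ k : ℝ, k ∈ Set.Ioo (0:ℝ) 1 → L k = r →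
        let a := ellipticK k * (1 + k) ^ 2 /
          (2 * ellipticE k - (1 - k ^ 2) * ellipticK k)
        let b := ellipticK k * (1 - k) ^ 2 /
          (2 * ellipticE k - (1 - k ^ 2) * ellipticK k)
        a > 0 ∧ b > 0 ∧
          (Real.sqrt a - Real.sqrt b) / (Real.sqrt a + Real.sqrt b) = k ∧
          Real.sqrt (r / 2) * (Real.sqrt a + Real.sqrt b) = 2 * ellipticK k ∧
          (Real.sqrt a + Real.sqrt b) * Real.sqrt (2 / r) * ellipticE k
            - Real.sqrt (a * b) = 1 := by
  have hpi := pi_pos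
  refine ⟨?_, ?_⟩
  · obtain ⟨c, hc0, hc1, hc⟩ := exists_lt_L (r := r) (lt_trans (by positivity) hr)
    have hL0 : L 0 < r := by
      rw [L_eq, ellipticK_zero, ellipticD_zero]
      linarith [show 2 * (π / 2) * (π / 2) = π ^ 2 / 2 by ring]
    obtain ⟨k, hk, hkr⟩ := intermediate_value_Ioo hc0.le (continuousOn_L hc1) ⟨hL0, hc⟩
    refine ⟨k, ⟨⟨hk.1, hk.2.trans hc1⟩, hkr⟩, ?_⟩
    rintro k' ⟨hk', hkr'⟩
    rcases lt_trichotomy k' k with h | h | h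
    · have := L_lt hk'.1.le h (hk.2.trans hc1)
      linarith
    · exact h
    · have := L_lt hk.1.le h hk'.2
      linarith
  · intro k hk hkr
    have hK := ellipticK_pos hk.1.le hk.2
    have hD : 0 < ellipticD k := lt_of_lt_of_le (by linarith) (ellipticD_ge hk.1.le hk.2)
    have hDdef : 2 * ellipticE k - (1 - k ^ 2) * ellipticK k = ellipticD k := rfl
    rw [L_eq] at hkr
    have h1p : 0 < 1 + k := by linarith [hk.1]
    have h1m : 0 < 1 - k := by linarith [hk.2]
    intro a b
    set K := ellipticK k
    set D := ellipticD k
    have haK : a = K * (1 + k) ^ 2 / D := rfl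
    have hbK : b = K * (1 - k) ^ 2 / D := rfl
    have ha : √a = (1 + k) * (√K / √D) := by
      rw [haK, mul_div_right_comm, sqrt_mul (by positivity), sqrt_div hK.le, sqrt_sq h1p.le, mul_comm]
    have hb : √b = (1 - k) * (√K / √D) := by
      rw [hbK, mul_div_right_comm, sqrt_mul (by positivity), sqrt_div hK.le, sqrt_sq h1m.le, mul_comm]
    have hap : 0 < a := by rw [haK]; positivity
    have hbp : 0 < b := by rw [hbK]; positivity
    have hx : 0 < √K := sqrt_pos.2 hK
    have hy : 0 < √D := sqrt_pos.2 hD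
    have hxx : √K ^ 2 = K := sq_sqrt hK.le
    have hyy : √D ^ 2 = D := sq_sqrt hD.le
    have hr2 : √(r / 2) = √K * √D := by
      rw [← sqrt_mul hK.le, ← hkr]; congr 1; ring
    have h2r : √(2 / r) = 1 / (√K * √D) := by
      rw [← hr2, ← inv_div, sqrt_inv, one_div]
    refine ⟨hap, hbp, ?_, ?_, ?_⟩
    · rw [ha, hb]; field_simp; ring
    · rw [ha, hb, hr2]; field_simp; linear_combination 2 * hxx
    · rw [sqrt_mul hap.le, ha, hb, h2r]
      field_simp
      rw [hxx, hyy]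
      linear_combination hDdef
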